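/- arXiv:1107.5887 — 2 statements merged into one kernel-verified Lean document; each statement's English description precedes it below -/
import Mathlib

section
/- Let n ≥ 1 be a natural number, A > 0, and let v : [0,∞) → [0,∞) be nondecreasing with v(0) = 0 and v(r) > 0 for every r > 0, and suppose that for almost every r > 0 the derivative v'(r) exists and satisfies A·v'(r) ≥ v(r)^{(n−1)/n}. Then v(r) ≥ (r/(n·A))ⁿ for every r ≥ 0. -/
open Set Filter MeasureTheory

/-!
Separating variables, the inequality `v ^ (1 - 1/n) ≤ A v'` says that `(v ^ (1/n))' ≥ 1 / (n A)`
almost everywhere. A monotone function need not be the integral of its a.e. derivative, but its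
increments dominate that integral (the singular part only adds growth). So `v ^ (1/n)`, which is
monotone along with `v`, grows at least linearly with slope `1 / (n A)`.
-/

section

variable {f v : ℝ → ℝ} {a b x A c p q : ℝ}

lemma intervalIntegral_deriv_le_sub_of_monotoneOn (hab : a ≤ b) (hf : MonotoneOn f (Icc a b)) :
    ∫ x in a..b, deriv f x ≤ f b - f a := by
  have hfab : 0 ≤ f b - f a :=
    sub_nonneg.2 (hf (left_mem_Icc.2 hab) (right_mem_Icc.2 hab) hab)
  rw [← uIcc_of_le hab] at hf
  have hmem := hf.intervalIntegral_deriv_mem_uIcc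
  rw [uIcc_of_le hfab] at hmem
  exact hmem.2

lemma mul_sub_le_sub_of_monotoneOn_of_ae_le_deriv (hab : a ≤ b) (hf : MonotoneOn f (Icc a b))
    (hc : ∀ᵐ x ∂volume.restrict (Ioo a b), c ≤ deriv f x) :
    c * (b - a) ≤ f b - f a := by
  have hint : IntervalIntegrable (deriv f) volume a b :=
    MonotoneOn.intervalIntegrable_deriv (by rwa [uIcc_of_le hab])
  rw [Measure.restrict_congr_set Ioo_ae_eq_Icc] at hc
  calc c * (b - a) = ∫ _ in a..b, c := by
        rw [intervalIntegral.integral_const, smul_eq_mul, mul_comm]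
    _ ≤ ∫ x in a..b, deriv f x :=
        intervalIntegral.integral_mono_ae_restrict hab intervalIntegrable_const hint hc
    _ ≤ f b - f a := intervalIntegral_deriv_le_sub_of_monotoneOn hab hf

lemma div_le_deriv_rpow_of_rpow_le_mul_deriv (hA : 0 < A) (hq : 0 ≤ q) (hvx : 0 < v x)
    (hODE : v x ^ (1 - q) ≤ A * deriv v x) :
    q / A ≤ deriv (fun y => v y ^ q) x := by
  -- At a point of non-differentiability `deriv v x = 0`, which `0 < v x ^ (1 - q)` excludes.
  have hderiv : 0 < deriv v x :=
    pos_of_mul_pos_right ((Real.rpow_pos_of_pos hvx _).trans_le hODE) hA.le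
  have hdiff : DifferentiableAt ℝ v x := differentiableAt_of_deriv_ne_zero hderiv.ne'
  have hone : 1 ≤ A * deriv v x * v x ^ (q - 1) :=
    calc 1 = v x ^ (1 - q) * v x ^ (q - 1) := by
          rw [← Real.rpow_add hvx, sub_add_sub_cancel, sub_self, Real.rpow_zero]
      _ ≤ A * deriv v x * v x ^ (q - 1) := by gcongr
  rw [deriv_rpow_const hdiff (Or.inl hvx.ne'), div_le_iff₀ hA]
  calc q = q * 1 := (mul_one q).symm
    _ ≤ q * (A * deriv v x * v x ^ (q - 1)) := by gcongr
    _ = deriv v x * q * v x ^ (q - 1) * A := by ring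

lemma rpow_add_le_rpow_of_ae_rpow_le_mul_deriv (hab : a ≤ b) (hA : 0 < A) (hq : 0 ≤ q)
    (hmono : MonotoneOn v (Icc a b)) (hva : 0 ≤ v a) (hvpos : ∀ r ∈ Ioo a b, 0 < v r)
    (hODE : ∀ᵐ r ∂volume.restrict (Ioo a b), v r ^ (1 - q) ≤ A * deriv v r) :
    v a ^ q + q / A * (b - a) ≤ v b ^ q := by
  have hmono_rpow : MonotoneOn (fun r => v r ^ q) (Icc a b) := fun r hr s hs hrs =>
    Real.rpow_le_rpow (hva.trans (hmono (left_mem_Icc.2 hab) hr hr.1)) (hmono hr hs hrs) hq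
  have hslope : ∀ᵐ r ∂volume.restrict (Ioo a b), q / A ≤ deriv (fun s => v s ^ q) r := by
    filter_upwards [hODE, ae_restrict_mem measurableSet_Ioo] with r hr hrab
    exact div_le_deriv_rpow_of_rpow_le_mul_deriv hA hq (hvpos r hrab) hr
  linarith [mul_sub_le_sub_of_monotoneOn_of_ae_le_deriv hab hmono_rpow hslope]

theorem stmt_13_general (hab : a ≤ b) (hp : 0 < p) (hA : 0 < A)
    (hmono : MonotoneOn v (Icc a b)) (hva : 0 ≤ v a) (hvpos : ∀ r ∈ Ioo a b, 0 < v r)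
    (hODE : ∀ᵐ r ∂volume.restrict (Ioo a b), v r ^ ((p - 1) / p) ≤ A * deriv v r) :
    (v a ^ p⁻¹ + (b - a) / (p * A)) ^ p ≤ v b := by
  have hvb : 0 ≤ v b := hva.trans (hmono (left_mem_Icc.2 hab) (right_mem_Icc.2 hab) hab)
  have hexp : (p - 1) / p = 1 - p⁻¹ := by field_simp
  have hlin : v a ^ p⁻¹ + p⁻¹ / A * (b - a) ≤ v b ^ p⁻¹ :=
    rpow_add_le_rpow_of_ae_rpow_le_mul_deriv hab hA (inv_nonneg.2 hp.le) hmono hva hvpos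
      (hexp ▸ hODE)
  have hnonneg : 0 ≤ v a ^ p⁻¹ + (b - a) / (p * A) :=
    add_nonneg (Real.rpow_nonneg hva _) (div_nonneg (sub_nonneg.2 hab) (by positivity))
  rw [← Real.le_rpow_inv_iff_of_pos hnonneg hvb hp]
  convert hlin using 2
  field_simp

end

/-- The differential inequality arising from the `L¹` Sobolev (isoperimetric) inequality:
if `v` is nondecreasing on `[0,∞)`, `v 0 = 0`, `v > 0` on `(0,∞)`, and for a.e. `r > 0`
the derivative `v'(r)` exists with `A v'(r) ≥ v(r)^{(n-1)/n}`, then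
`v(r) ≥ (r/(nA))ⁿ`. -/
theorem stmt_13 (n : ℕ) (hn : 1 ≤ n) (A : ℝ) (hA : 0 < A) (v : ℝ → ℝ)
    (hmono : MonotoneOn v (Ici 0)) (hv0 : v 0 = 0)
    (hvpos : ∀ r > (0:ℝ), 0 < v r)
    (hODE : ∀ᵐ r ∂(volume.restrict (Ioi (0:ℝ))),
      ∃ d : ℝ, HasDerivAt v d r ∧ v r ^ (((n : ℝ) - 1) / n) ≤ A * d) :
    ∀ r ∈ Ici (0:ℝ), (r / ((n : ℝ) * A)) ^ n ≤ v r := by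
  intro r hr
  have hn_pos : (0 : ℝ) < n := Nat.cast_pos.2 hn
  have hderiv : ∀ᵐ s ∂volume.restrict (Ioo 0 r), v s ^ (((n : ℝ) - 1) / n) ≤ A * deriv v s := by
    filter_upwards [ae_restrict_of_ae_restrict_of_subset Ioo_subset_Ioi_self hODE]
      with s ⟨d, hd, hle⟩
    rwa [hd.deriv]
  have hgrowth := stmt_13_general hr hn_pos hA (hmono.mono Icc_subset_Ici_self) hv0.ge
    (fun s hs => hvpos s hs.1) hderiv
  rwa [hv0, Real.zero_rpow (inv_ne_zero hn_pos.ne'), zero_add, sub_zero,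
    Real.rpow_natCast] at hgrowth
end

section
/- Let n ≥ 2 be a natural number, p ∈ (1,n) a real number, q = p/(p−1), and A > 0. Let μ be a Borel measure on ℝⁿ such that there is a constant C with μ(B(0,r)) ≤ C·rⁿ for all r > 0 and such that ν := lim_{r→∞} μ(B(0,r))/rⁿ exists, where B(0,r) is the Euclidean ball. Suppose that for every continuously differentiable function f : ℝⁿ → ℝ with ∫_{ℝⁿ} |f|^{pn/(n−p)} dμ < ∞ and ∫_{ℝⁿ} ‖∇f‖^p dμ < ∞ one has ( ∫_{ℝⁿ} |f|^{pn/(n−p)} dμ )^{(n−p)/n} ≤ A^p · ∫_{ℝⁿ} ‖∇f(x)‖^p dμ(x). Then ν^{1−p/n} · A_{n,p} ≤ A^p · ν · B_{n,p}, where A_{n,p} = ( ∫₀^∞ n·q·ρ^{q−1+n}·(1+ρ^q)^{−(n+1)} dρ )^{1−p/n} and B_{n,p} = q^p·((n−p)/p)^p·n·∫₀^∞ ρ^{n+q−1}·(1+ρ^q)^{−n} dρ. In particular, if ν > 0 then ν^{p/n} ≥ A_{n,p}/(A^p·B_{n,p}). -/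
open Set Filter MeasureTheory

/-!
Write `φ_s(ρ) = (1 + ρ ^ q) ^ (-s)`. The Sobolev inequality is tested on the Aubin–Talenti functions
`x ↦ φ_a(‖x‖ / l)`, `a = (N - p) / p`, as `l → ∞`: the critical power of such a function is
`φ_N(‖x‖ / l)`, and the `p`-th power of its gradient is a multiple of
`l ^ (-p) * (φ_{N-1} - φ_N)(‖x‖ / l)`.

By Fubini, integrating a radial function against `μ` amounts to integrating minus its radial
derivative against the volumes of the balls. Since those are asymptotic to `ν r ^ N`, dominated
convergence shows that `l ^ (-N) ∫ φ_s(‖x‖ / l) dμ` tends to `ν N ∫ ρ ^ (N - 1) φ_s(ρ) dρ`,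
as if `μ` were `ν` times a rotation-invariant `N`-homogeneous measure. The powers of `l` on the two
sides of the Sobolev inequality cancel, so it passes to the limit.
-/

open scoped ENNReal Topology Asymptotics

section SublevelSets

variable {X : Type*} [MeasurableSpace X] {μ : Measure X} {f : X → ℝ}

lemma sigmaFinite_of_measure_setOf_lt_ne_top (hfin : ∀ t, μ {x | f x < t} ≠ ∞) :
    SigmaFinite μ := by
  refine Measure.sigmaFinite_of_countable (countable_range fun k : ℕ ↦ {x | f x < k})
    (forall_mem_range.2 fun k ↦ (hfin k).lt_top) ?_
  simpa only [sUnion_range, eq_univ_iff_forall, mem_iUnion, mem_ofPred_eq] using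
    fun x ↦ exists_nat_gt (f x)

variable {τ : Measure ℝ} [SFinite τ] {h : ℝ → ℝ}

lemma integrable_prod_indicator_setOf_lt [SFinite μ] (hf : Measurable f)
    (hfin : ∀ t, μ {x | f x < t} ≠ ∞) (hh : Measurable h)
    (hint : Integrable (fun t ↦ h t * μ.real {x | f x < t}) τ) :
    Integrable ({z : X × ℝ | f z.1 < z.2}.indicator fun z ↦ h z.2) (μ.prod τ) := by
  have hmeas : Measurable ({z : X × ℝ | f z.1 < z.2}.indicator fun z ↦ h z.2) :=
    (hh.comp measurable_snd).indicator
      (measurableSet_lt (hf.comp measurable_fst) measurable_snd)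
  have hslice (t : ℝ) : (fun x ↦ {z : X × ℝ | f z.1 < z.2}.indicator (fun z ↦ h z.2) (x, t)) =
      {x | f x < t}.indicator fun _ ↦ h t := rfl
  have hsub (t : ℝ) : MeasurableSet {x | f x < t} := measurableSet_lt hf measurable_const
  refine (integrable_prod_iff' hmeas.aestronglyMeasurable).2
    ⟨.of_forall fun t ↦ ?_, hint.norm.congr (.of_forall fun t ↦ ?_)⟩
  · rw [hslice]
    exact (integrable_indicator_iff (hsub t)).2 (integrableOn_const (hfin t))
  · simp only [congrFun (hslice t), norm_indicator_eq_indicator_norm,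
      integral_indicator_const _ (hsub t), smul_eq_mul, norm_mul,
      Real.norm_of_nonneg measureReal_nonneg, mul_comm]

lemma integrable_integral_Ioi_and_integral_eq (hf : Measurable f)
    (hfin : ∀ t, μ {x | f x < t} ≠ ∞) (hh : Measurable h)
    (hint : Integrable (fun t ↦ h t * μ.real {x | f x < t}) τ) :
    Integrable (fun x ↦ ∫ t in Ioi (f x), h t ∂τ) μ ∧
      ∫ x, ∫ t in Ioi (f x), h t ∂τ ∂μ = ∫ t, h t * μ.real {x | f x < t} ∂τ := by
  have := sigmaFinite_of_measure_setOf_lt_ne_top hfin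
  have hprod := integrable_prod_indicator_setOf_lt hf hfin hh hint
  have hinner (x : X) : ∫ t, {z : X × ℝ | f z.1 < z.2}.indicator (fun z ↦ h z.2) (x, t) ∂τ =
      ∫ t in Ioi (f x), h t ∂τ :=
    integral_indicator (s := Ioi (f x)) measurableSet_Ioi
  have houter (t : ℝ) : ∫ x, {z : X × ℝ | f z.1 < z.2}.indicator (fun z ↦ h z.2) (x, t) ∂μ =
      h t * μ.real {x | f x < t} :=
    (integral_indicator_const (h t) (measurableSet_lt hf measurable_const)).trans (mul_comm _ _)
  simp only [← hinner, ← houter]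
  exact ⟨hprod.integral_prod_left, integral_integral_swap hprod⟩

end SublevelSets

section VolumeGrowth

variable {X : Type*} [PseudoMetricSpace X] [MeasurableSpace X] {μ : Measure X} {x₀ : X}

lemma measure_ball_ne_top_of_le_ofReal {V : ℝ → ℝ}
    (hV : ∀ r > 0, μ (Metric.ball x₀ r) ≤ ENNReal.ofReal (V r)) (r : ℝ) :
    μ (Metric.ball x₀ r) ≠ ∞ :=
  ne_top_of_le_ne_top ENNReal.ofReal_ne_top <|
    (measure_mono (Metric.ball_subset_ball (le_max_left r 1))).trans (hV _ (by positivity))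

lemma monotone_measureReal_ball (hfin : ∀ r, μ (Metric.ball x₀ r) ≠ ∞) :
    Monotone fun r ↦ μ.real (Metric.ball x₀ r) :=
  fun _ r hr ↦ measureReal_mono (Metric.ball_subset_ball hr) (hfin r)

variable {N ν : ℝ}

lemma exists_eventually_measureReal_ball_mul_div_rpow_le (hfin : ∀ r, μ (Metric.ball x₀ r) ≠ ∞)
    (hν : Tendsto (fun r ↦ μ.real (Metric.ball x₀ r) / r ^ N) atTop (𝓝 ν)) :
    ∃ K, ∀ᶠ l in atTop, ∀ ρ > 0, μ.real (Metric.ball x₀ (l * ρ)) / l ^ N ≤ K * (1 + ρ ^ N) := by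
  obtain ⟨R, hR⟩ := eventually_atTop.1 (hν.eventually_le_const (lt_add_one ν))
  refine ⟨ν + 1, ?_⟩
  filter_upwards [eventually_ge_atTop R, eventually_gt_atTop 0] with l hRl hl ρ hρ
  have hK : 0 ≤ ν + 1 := le_trans (by positivity) (hR l hRl)
  have hball : μ.real (Metric.ball x₀ (l * max ρ 1)) ≤ (ν + 1) * (l * max ρ 1) ^ N :=
    (div_le_iff₀ (by positivity)).1
      (hR _ (hRl.trans (le_mul_of_one_le_right hl.le (le_max_right ρ 1))))
  have hpow : max ρ 1 ^ N ≤ 1 + ρ ^ N := by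
    rcases max_choice ρ 1 with hρ1 | hρ1 <;> rw [hρ1]
    · exact le_add_of_nonneg_left zero_le_one
    · rw [Real.one_rpow]
      exact le_add_of_nonneg_right (by positivity)
  rw [div_le_iff₀ (by positivity)]
  calc μ.real (Metric.ball x₀ (l * ρ))
      ≤ μ.real (Metric.ball x₀ (l * max ρ 1)) :=
        monotone_measureReal_ball hfin (by gcongr; exact le_max_left ρ 1)
    _ ≤ (ν + 1) * (l * max ρ 1) ^ N := hball
    _ = (ν + 1) * max ρ 1 ^ N * l ^ N := by
        rw [Real.mul_rpow hl.le (by positivity)]; ring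
    _ ≤ (ν + 1) * (1 + ρ ^ N) * l ^ N := by gcongr

lemma exists_eventually_norm_mul_measureReal_ball_le (hfin : ∀ r, μ (Metric.ball x₀ r) ≠ ∞)
    (hν : Tendsto (fun r ↦ μ.real (Metric.ball x₀ r) / r ^ N) atTop (𝓝 ν)) (h : ℝ → ℝ) :
    ∃ K, ∀ᶠ l in atTop, ∀ ρ > 0,
      ‖h ρ * (μ.real (Metric.ball x₀ (l * ρ)) / l ^ N)‖ ≤ K * ‖h ρ * (1 + ρ ^ N)‖ := by
  obtain ⟨K, hK⟩ := exists_eventually_measureReal_ball_mul_div_rpow_le hfin hν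
  refine ⟨K, ?_⟩
  filter_upwards [hK, eventually_gt_atTop 0] with l hKl hl ρ hρ
  have hV : 0 ≤ μ.real (Metric.ball x₀ (l * ρ)) / l ^ N := by positivity
  have hG : 0 ≤ 1 + ρ ^ N := by positivity
  rw [norm_mul, norm_mul, mul_left_comm, Real.norm_of_nonneg hV, Real.norm_of_nonneg hG]
  exact mul_le_mul_of_nonneg_left (hKl ρ hρ) (norm_nonneg _)

variable {h : ℝ → ℝ}

lemma aestronglyMeasurable_mul_measureReal_ball_div (hfin : ∀ r, μ (Metric.ball x₀ r) ≠ ∞)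
    (hh : Measurable h) (l c : ℝ) (τ : Measure ℝ) :
    AEStronglyMeasurable (fun ρ ↦ h ρ * (μ.real (Metric.ball x₀ (l * ρ)) / c)) τ :=
  (hh.mul (((monotone_measureReal_ball hfin).measurable.comp
    (measurable_const_mul l)).div_const c)).aestronglyMeasurable

lemma tendsto_integral_mul_measureReal_ball_div_rpow (hfin : ∀ r, μ (Metric.ball x₀ r) ≠ ∞)
    (hν : Tendsto (fun r ↦ μ.real (Metric.ball x₀ r) / r ^ N) atTop (𝓝 ν)) (hh : Measurable h)
    (hint : IntegrableOn (fun ρ ↦ h ρ * (1 + ρ ^ N)) (Ioi 0)) :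
    Tendsto (fun l ↦ ∫ ρ in Ioi 0, h ρ * (μ.real (Metric.ball x₀ (l * ρ)) / l ^ N)) atTop
      (𝓝 (ν * ∫ ρ in Ioi 0, h ρ * ρ ^ N)) := by
  obtain ⟨K, hK⟩ := exists_eventually_norm_mul_measureReal_ball_le hfin hν h
  have hpointwise : ∀ ρ ∈ Ioi (0 : ℝ),
      Tendsto (fun l ↦ h ρ * (μ.real (Metric.ball x₀ (l * ρ)) / l ^ N)) atTop
        (𝓝 (ν * (h ρ * ρ ^ N))) := fun ρ (hρ : 0 < ρ) ↦ by
    have hlim := (hν.comp (tendsto_id.atTop_mul_const hρ)).mul_const (h ρ * ρ ^ N)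
    refine hlim.congr' ?_
    filter_upwards [eventually_gt_atTop 0] with l hl
    simp only [Function.comp_apply, id_eq, Real.mul_rpow hl.le hρ.le]
    field_simp
  rw [← integral_const_mul]
  refine tendsto_integral_filter_of_dominated_convergence _
    (.of_forall fun l ↦ aestronglyMeasurable_mul_measureReal_ball_div hfin hh l _ _)
    ?_ (hint.norm.const_mul K) (ae_restrict_of_forall_mem measurableSet_Ioi hpointwise)
  filter_upwards [hK] with l hl using ae_restrict_of_forall_mem measurableSet_Ioi hl

variable [OpensMeasurableSpace X]

lemma eventually_integrable_and_integral_integral_Ioi_dist_div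
    (hfin : ∀ r, μ (Metric.ball x₀ r) ≠ ∞)
    (hν : Tendsto (fun r ↦ μ.real (Metric.ball x₀ r) / r ^ N) atTop (𝓝 ν)) (hh : Measurable h)
    (hint : IntegrableOn (fun ρ ↦ h ρ * (1 + ρ ^ N)) (Ioi 0)) :
    ∀ᶠ l in atTop, Integrable (fun x ↦ ∫ ρ in Ioi (dist x x₀ / l), h ρ) μ ∧
      ∫ x, (∫ ρ in Ioi (dist x x₀ / l), h ρ) ∂μ =
        ∫ ρ in Ioi 0, h ρ * μ.real (Metric.ball x₀ (l * ρ)) := by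
  obtain ⟨K, hK⟩ := exists_eventually_norm_mul_measureReal_ball_le hfin hν h
  filter_upwards [hK, eventually_gt_atTop 0] with l hKl hl
  have hball (ρ : ℝ) : {x | dist x x₀ / l < ρ} = Metric.ball x₀ (l * ρ) := by
    ext x
    simp only [mem_ofPred_eq, Metric.mem_ball, div_lt_iff₀' hl]
  have hdom : IntegrableOn (fun ρ ↦ h ρ * (μ.real (Metric.ball x₀ (l * ρ)) / l ^ N)) (Ioi 0) :=
    (hint.norm.const_mul K).mono'
      (aestronglyMeasurable_mul_measureReal_ball_div hfin hh l _ _)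
      (ae_restrict_of_forall_mem measurableSet_Ioi hKl)
  have hmul : IntegrableOn (fun ρ ↦ h ρ * μ.real {x | dist x x₀ / l < ρ}) (Ioi 0) := by
    refine (hdom.mul_const (l ^ N)).congr (.of_forall fun ρ ↦ ?_)
    simp only [hball, mul_assoc, div_mul_cancel₀ _ (Real.rpow_pos_of_pos hl N).ne']
  have hrestrict (x : X) : ∫ ρ in Ioi (dist x x₀ / l), h ρ ∂(volume.restrict (Ioi 0)) =
      ∫ ρ in Ioi (dist x x₀ / l), h ρ := by
    rw [Measure.restrict_restrict measurableSet_Ioi,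
      inter_eq_left.2 (Ioi_subset_Ioi (by positivity))]
  simpa only [hrestrict, hball] using integrable_integral_Ioi_and_integral_eq
    (by fun_prop) (fun ρ ↦ by rw [hball]; exact hfin _) hh hmul

lemma tendsto_integral_integral_Ioi_dist_div_div_rpow (hfin : ∀ r, μ (Metric.ball x₀ r) ≠ ∞)
    (hν : Tendsto (fun r ↦ μ.real (Metric.ball x₀ r) / r ^ N) atTop (𝓝 ν)) (hh : Measurable h)
    (hint : IntegrableOn (fun ρ ↦ h ρ * (1 + ρ ^ N)) (Ioi 0)) :
    Tendsto (fun l ↦ (∫ x, (∫ ρ in Ioi (dist x x₀ / l), h ρ) ∂μ) / l ^ N) atTop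
      (𝓝 (ν * ∫ ρ in Ioi 0, h ρ * ρ ^ N)) := by
  refine (tendsto_integral_mul_measureReal_ball_div_rpow hfin hν hh hint).congr' ?_
  filter_upwards [eventually_integrable_and_integral_integral_Ioi_dist_div hfin hν hh hint]
    with l hl
  simp only [hl.2, ← integral_div, mul_div_assoc]

end VolumeGrowth

section TalentiProfile

/-- The Aubin–Talenti profile of a radial extremal for the Sobolev inequality. The function
`f_l(x) = l ^ ((q - 1) * a) * (l ^ q + ‖x‖ ^ q) ^ (-a)` of the literature, `a = (N - p) / p`, is
`l ^ (-a) * talentiProfile q a (‖x‖ / l)`. -/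
noncomputable def talentiProfile (q s ρ : ℝ) : ℝ := (1 + ρ ^ q) ^ (-s)

/-- Minus the derivative of `talentiProfile q s` on `(0, ∞)`: the weight with which the ball of
radius `ρ` enters the integral of a radial function with this profile. -/
noncomputable def talentiDensity (q s ρ : ℝ) : ℝ :=
  s * q * ρ ^ (q - 1) * talentiProfile q (s + 1) ρ

variable {a N q s t ρ : ℝ}

lemma measurable_talentiDensity : Measurable (talentiDensity q s) := by
  unfold talentiDensity talentiProfile
  fun_prop

lemma continuousOn_talentiProfile (hq : 0 ≤ q) : ContinuousOn (talentiProfile q s) (Ici 0) :=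
  (continuous_const.add (Real.continuous_rpow_const hq)).continuousOn.rpow_const
    fun _ hρ ↦ .inl (add_pos_of_pos_of_nonneg one_pos (Real.rpow_nonneg hρ q)).ne'

lemma talentiProfile_nonneg (hρ : 0 ≤ ρ) : 0 ≤ talentiProfile q s ρ := by
  unfold talentiProfile
  positivity

lemma talentiDensity_nonneg (hq : 0 ≤ q) (hs : 0 ≤ s) (hρ : 0 ≤ ρ) :
    0 ≤ talentiDensity q s ρ :=
  mul_nonneg (by positivity) (talentiProfile_nonneg hρ)

lemma talentiProfile_rpow (hρ : 0 ≤ ρ) :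
    talentiProfile q s ρ ^ t = talentiProfile q (s * t) ρ := by
  have hbase : 0 ≤ 1 + ρ ^ q := by positivity
  rw [talentiProfile, talentiProfile, ← Real.rpow_mul hbase, neg_mul]

lemma talentiProfile_sub_talentiProfile_add_one (hρ : 0 ≤ ρ) :
    talentiProfile q s ρ - talentiProfile q (s + 1) ρ = ρ ^ q * talentiProfile q (s + 1) ρ := by
  have hbase : 1 + ρ ^ q ≠ 0 := by positivity
  have hstep : talentiProfile q s ρ = talentiProfile q (s + 1) ρ * (1 + ρ ^ q) := by
    rw [talentiProfile, talentiProfile, ← Real.rpow_add_one hbase]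
    ring_nf
  rw [hstep]
  ring

lemma talentiProfile_le_rpow_neg (hs : 0 ≤ s) (hρ : 0 < ρ) :
    talentiProfile q s ρ ≤ ρ ^ (-(q * s)) := by
  rw [← mul_neg, Real.rpow_mul hρ.le]
  exact Real.rpow_le_rpow_of_nonpos (by positivity) (le_add_of_nonneg_left zero_le_one)
    (neg_nonpos.2 hs)

lemma talentiDensity_rpow (hq : 0 ≤ q) (hs : 0 ≤ s) (hρ : 0 ≤ ρ) :
    talentiDensity q s ρ ^ t =
      (s * q) ^ t * (ρ ^ ((q - 1) * t) * talentiProfile q ((s + 1) * t) ρ) := by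
  have hprofile := talentiProfile_nonneg (q := q) (s := s + 1) hρ
  rw [talentiDensity, Real.mul_rpow (by positivity) hprofile, Real.mul_rpow (by positivity)
    (by positivity), talentiProfile_rpow hρ, ← Real.rpow_mul hρ, mul_assoc]

lemma hasDerivAt_talentiProfile (hρ : 0 < ρ) :
    HasDerivAt (talentiProfile q s) (-talentiDensity q s ρ) ρ := by
  have hbase : HasDerivAt (fun ρ : ℝ ↦ 1 + ρ ^ q) (q * ρ ^ (q - 1)) ρ :=
    (Real.hasDerivAt_rpow_const (.inl hρ.ne')).const_add 1
  refine (hbase.rpow_const (p := -s) (.inl (by positivity))).congr_deriv ?_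
  rw [talentiDensity, talentiProfile, neg_add']
  ring

lemma tendsto_rpow_mul_talentiProfile_atTop (hs : 0 ≤ s) (has : a < q * s) :
    Tendsto (fun ρ ↦ ρ ^ a * talentiProfile q s ρ) atTop (𝓝 0) := by
  refine squeeze_zero' ?_ ?_ (tendsto_rpow_neg_atTop (sub_pos.2 has))
  · filter_upwards [eventually_ge_atTop 0] with ρ hρ
    exact mul_nonneg (Real.rpow_nonneg hρ a) (talentiProfile_nonneg hρ)
  · filter_upwards [eventually_gt_atTop 0] with ρ hρ
    calc ρ ^ a * talentiProfile q s ρ ≤ ρ ^ a * ρ ^ (-(q * s)) := by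
          gcongr
          exact talentiProfile_le_rpow_neg hs hρ
      _ = ρ ^ (-(q * s - a)) := by rw [← Real.rpow_add hρ, neg_sub, sub_eq_add_neg]

lemma integrableOn_rpow_mul_talentiProfile (hq : 0 ≤ q) (hs : 0 ≤ s) (ha : -1 < a)
    (has : a + 1 < q * s) :
    IntegrableOn (fun ρ ↦ ρ ^ a * talentiProfile q s ρ) (Ioi 0) := by
  have hcont := continuousOn_talentiProfile (s := s) hq
  have hatTop : talentiProfile q s =O[atTop] fun ρ ↦ ρ ^ (-(q * s)) := by
    refine .of_bound' ?_
    filter_upwards [eventually_gt_atTop 0] with ρ hρ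
    rw [Real.norm_of_nonneg (talentiProfile_nonneg hρ.le), Real.norm_of_nonneg (by positivity)]
    exact talentiProfile_le_rpow_neg hs hρ
  have hzero : talentiProfile q s =O[𝓝[>] 0] fun ρ ↦ ρ ^ (-0 : ℝ) := by
    simpa only [neg_zero, Real.rpow_zero] using
      ((hcont 0 self_mem_Ici).mono Ioi_subset_Ici_self).isBigO_one ℝ
  simpa only [add_sub_cancel_right] using mellin_convergent_of_isBigO_scalar
    ((hcont.mono Ioi_subset_Ici_self).locallyIntegrableOn measurableSet_Ioi) hatTop has hzero
    (by linarith)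

lemma talentiDensity_mul_rpow (hρ : 0 < ρ) :
    talentiDensity q s ρ * ρ ^ a =
      s * q * (ρ ^ (q - 1 + a) * talentiProfile q (s + 1) ρ) := by
  rw [talentiDensity, Real.rpow_add hρ]
  ring

lemma integrableOn_talentiDensity_mul_rpow (hq : 0 < q) (ha : 0 ≤ a) (has : a < q * s) :
    IntegrableOn (fun ρ ↦ talentiDensity q s ρ * ρ ^ a) (Ioi 0) := by
  have hs : 0 < s := (pos_iff_pos_of_mul_pos (ha.trans_lt has)).1 hq
  refine IntegrableOn.congr_fun ((integrableOn_rpow_mul_talentiProfile (s := s + 1) hq.le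
    (by linarith) (by linarith) (by linarith)).const_mul (s * q))
    (fun ρ hρ ↦ (talentiDensity_mul_rpow hρ).symm) measurableSet_Ioi

lemma integrableOn_talentiDensity_mul_one_add_rpow (hq : 0 < q) (hN : 0 ≤ N) (hs : N < q * s) :
    IntegrableOn (fun ρ ↦ talentiDensity q s ρ * (1 + ρ ^ N)) (Ioi 0) := by
  have hadd := (integrableOn_talentiDensity_mul_rpow hq le_rfl (hN.trans_lt hs)).add
    (integrableOn_talentiDensity_mul_rpow hq hN hs)
  refine hadd.congr (.of_forall fun ρ ↦ ?_)
  simp only [Pi.add_apply, Real.rpow_zero, mul_add]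

lemma integral_Ioi_talentiDensity (hq : 0 < q) (hs : 0 < s) {r : ℝ} (hr : 0 ≤ r) :
    ∫ ρ in Ioi r, talentiDensity q s ρ = talentiProfile q s r := by
  have hsub : Ioi r ⊆ Ioi 0 := Ioi_subset_Ioi hr
  have hint : IntegrableOn (talentiDensity q s) (Ioi r) := by
    simpa only [Real.rpow_zero, mul_one] using
      (integrableOn_talentiDensity_mul_rpow hq le_rfl (mul_pos hq hs)).mono_set hsub
  have hlim : Tendsto (talentiProfile q s) atTop (𝓝 0) := by
    simpa only [Real.rpow_zero, one_mul] using
      tendsto_rpow_mul_talentiProfile_atTop hs.le (mul_pos hq hs)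
  have hftc := integral_Ioi_of_hasDerivAt_of_tendsto
    ((continuousOn_talentiProfile hq.le r hr).mono (Ici_subset_Ici.2 hr))
    (fun ρ hρ ↦ hasDerivAt_talentiProfile (hsub hρ)) hint.neg hlim
  rwa [integral_neg, zero_sub, neg_inj] at hftc

lemma integral_talentiDensity_mul_rpow (hq : 0 < q) (hN : 0 < N) (hs : N < q * s) :
    ∫ ρ in Ioi 0, talentiDensity q s ρ * ρ ^ N =
      N * ∫ ρ in Ioi 0, ρ ^ (N - 1) * talentiProfile q s ρ := by
  have hs0 : 0 < s := (pos_iff_pos_of_mul_pos (hN.trans hs)).1 hq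
  have hint := integrableOn_rpow_mul_talentiProfile (a := N - 1) hq.le hs0.le (by linarith)
    (by linarith)
  have hzero : Tendsto ((fun ρ ↦ ρ ^ N) * talentiProfile q s) (𝓝[>] 0) (𝓝 0) := by
    have hcont := (Real.continuous_rpow_const hN.le).continuousOn.mul
      (continuousOn_talentiProfile (s := s) hq.le) 0 self_mem_Ici
    simpa only [Pi.mul_apply, Real.zero_rpow hN.ne', zero_mul] using
      (hcont.mono Ioi_subset_Ici_self).tendsto
  have hparts := integral_Ioi_mul_deriv_eq_deriv_mul
    (fun ρ (hρ : 0 < ρ) ↦ Real.hasDerivAt_rpow_const (p := N) (.inl hρ.ne'))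
    (fun ρ hρ ↦ hasDerivAt_talentiProfile (q := q) (s := s) hρ)
    ((integrableOn_talentiDensity_mul_rpow hq hN.le hs).neg.congr_fun
      (fun ρ _ ↦ by simp only [Pi.neg_apply, Pi.mul_apply]; ring) measurableSet_Ioi)
    (IntegrableOn.congr_fun (hint.const_mul N)
      (fun ρ _ ↦ by simp only [Pi.mul_apply]; ring) measurableSet_Ioi)
    hzero (tendsto_rpow_mul_talentiProfile_atTop hs0.le hs)
  simp only [mul_neg, integral_neg, mul_assoc, integral_const_mul, sub_self, zero_sub,
    neg_inj] at hparts
  simpa only [mul_comm (talentiDensity q s _)] using hparts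

lemma integral_rpow_mul_talentiProfile_nonneg :
    0 ≤ ∫ ρ in Ioi 0, ρ ^ a * talentiProfile q s ρ :=
  setIntegral_nonneg measurableSet_Ioi fun _ (hρ : 0 < _) ↦
    mul_nonneg (Real.rpow_nonneg hρ.le a) (talentiProfile_nonneg hρ.le)

lemma integral_rpow_mul_talentiProfile_sub (hq : 0 ≤ q) (hs : 0 ≤ s) (ha : -1 < a)
    (has : a + 1 < q * s) :
    (∫ ρ in Ioi 0, ρ ^ a * talentiProfile q s ρ) -
        ∫ ρ in Ioi 0, ρ ^ a * talentiProfile q (s + 1) ρ =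
      ∫ ρ in Ioi 0, ρ ^ (a + q) * talentiProfile q (s + 1) ρ := by
  rw [← integral_sub (integrableOn_rpow_mul_talentiProfile hq hs ha has)
    (integrableOn_rpow_mul_talentiProfile hq (by linarith) ha (by linarith))]
  refine setIntegral_congr_fun measurableSet_Ioi fun ρ (hρ : 0 < ρ) ↦ ?_
  simp only [← mul_sub, talentiProfile_sub_talentiProfile_add_one hρ.le, Real.rpow_add hρ,
    mul_assoc]

lemma integral_rpow_mul_talentiProfile_add_one (hq : 0 < q) (hN : 0 < N) (hs : N < q * s) :
    ∫ ρ in Ioi 0, s * q * ρ ^ (q - 1 + N) * talentiProfile q (s + 1) ρ =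
      N * ∫ ρ in Ioi 0, ρ ^ (N - 1) * talentiProfile q s ρ := by
  rw [← integral_talentiDensity_mul_rpow hq hN hs]
  refine setIntegral_congr_fun measurableSet_Ioi fun ρ hρ ↦ ?_
  simp only [talentiDensity_mul_rpow hρ, mul_assoc]

end TalentiProfile

section RadialAsymptotics

variable {X : Type*} [PseudoMetricSpace X] [MeasurableSpace X] [OpensMeasurableSpace X]
  {μ : Measure X} {x₀ : X} {N ν q s : ℝ}

lemma eventually_integrable_talentiProfile_dist_div (hq : 0 < q) (hN : 0 ≤ N) (hs : N < q * s)
    (hfin : ∀ r, μ (Metric.ball x₀ r) ≠ ∞)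
    (hν : Tendsto (fun r ↦ μ.real (Metric.ball x₀ r) / r ^ N) atTop (𝓝 ν)) :
    ∀ᶠ l in atTop, Integrable (fun x ↦ talentiProfile q s (dist x x₀ / l)) μ := by
  have hs0 : 0 < s := (pos_iff_pos_of_mul_pos (hN.trans_lt hs)).1 hq
  filter_upwards [eventually_gt_atTop 0,
    eventually_integrable_and_integral_integral_Ioi_dist_div hfin hν measurable_talentiDensity
      (integrableOn_talentiDensity_mul_one_add_rpow hq hN hs)] with l hl hint
  refine hint.1.congr (.of_forall fun x ↦ ?_)
  exact integral_Ioi_talentiDensity hq hs0 (by positivity)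

lemma tendsto_integral_talentiProfile_dist_div (hq : 0 < q) (hN : 0 < N) (hs : N < q * s)
    (hfin : ∀ r, μ (Metric.ball x₀ r) ≠ ∞)
    (hν : Tendsto (fun r ↦ μ.real (Metric.ball x₀ r) / r ^ N) atTop (𝓝 ν)) :
    Tendsto (fun l ↦ (∫ x, talentiProfile q s (dist x x₀ / l) ∂μ) / l ^ N) atTop
      (𝓝 (ν * (N * ∫ ρ in Ioi 0, ρ ^ (N - 1) * talentiProfile q s ρ))) := by
  have hs0 : 0 < s := (pos_iff_pos_of_mul_pos (hN.trans hs)).1 hq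
  rw [← integral_talentiDensity_mul_rpow hq hN hs]
  refine (tendsto_integral_integral_Ioi_dist_div_div_rpow hfin hν measurable_talentiDensity
    (integrableOn_talentiDensity_mul_one_add_rpow hq hN.le hs)).congr' ?_
  filter_upwards [eventually_gt_atTop 0] with l hl
  congr! 3 with x
  exact integral_Ioi_talentiDensity hq hs0 (by positivity)

end RadialAsymptotics

section Sobolev

variable {E : Type*} [NormedAddCommGroup E] [InnerProductSpace ℝ E] {N p q s l A : ℝ}

lemma talentiProfile_norm_div (hl : 0 ≤ l) (x : E) :
    talentiProfile q s (‖x‖ / l) = talentiProfile q s ‖l⁻¹ • x‖ := by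
  rw [norm_smul_of_nonneg (inv_nonneg.2 hl), div_eq_inv_mul]

lemma contDiff_talentiProfile_norm (hq : 1 < q) :
    ContDiff ℝ 1 fun x : E ↦ talentiProfile q s ‖x‖ :=
  (contDiff_const.add (contDiff_norm_rpow hq)).rpow_const_of_ne fun x ↦ by positivity

lemma contDiff_talentiProfile_norm_div (hq : 1 < q) (hl : 0 ≤ l) :
    ContDiff ℝ 1 fun x : E ↦ talentiProfile q s (‖x‖ / l) := by
  simp only [talentiProfile_norm_div hl]
  exact (contDiff_talentiProfile_norm hq).comp (contDiff_const_smul l⁻¹)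

lemma norm_fderiv_talentiProfile_norm (hq : 1 < q) (hs : 0 ≤ s) (x : E) :
    ‖fderiv ℝ (fun x : E ↦ talentiProfile q s ‖x‖) x‖ = talentiDensity q s ‖x‖ := by
  have hderiv : HasFDerivAt (fun x : E ↦ talentiProfile q s ‖x‖)
      ((-s * (1 + ‖x‖ ^ q) ^ (-s - 1)) • fderiv ℝ (fun x : E ↦ ‖x‖ ^ q) x) x :=
    ((differentiable_norm_rpow hq x).hasFDerivAt.const_add 1).rpow_const
      (.inl (by positivity))
  have hweight : ‖-s * (1 + ‖x‖ ^ q) ^ (-s - 1)‖ = s * talentiProfile q (s + 1) ‖x‖ := by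
    rw [neg_mul, norm_neg, Real.norm_of_nonneg (by positivity), talentiProfile, neg_add']
  rw [hderiv.fderiv, norm_smul, hweight, norm_fderiv_norm_id_rpow x hq, talentiDensity]
  ring

variable [CompleteSpace E]

lemma norm_gradient_talentiProfile_norm_div (hq : 1 < q) (hs : 0 ≤ s) (hl : 0 ≤ l) (x : E) :
    ‖gradient (fun x : E ↦ talentiProfile q s (‖x‖ / l)) x‖ =
      l⁻¹ * talentiDensity q s (‖x‖ / l) := by
  have hl' : 0 ≤ l⁻¹ := inv_nonneg.2 hl
  simp only [talentiProfile_norm_div hl]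
  rw [gradient, LinearIsometryEquiv.norm_map,
    fderiv_comp_smul (f := fun x : E ↦ talentiProfile q s ‖x‖), norm_smul,
    norm_fderiv_talentiProfile_norm hq hs, Real.norm_of_nonneg hl', norm_smul_of_nonneg hl',
    div_eq_inv_mul]

lemma norm_gradient_talentiProfile_norm_div_rpow (hpq : p.HolderConjugate q) (hpN : p ≤ N)
    (hl : 0 ≤ l) (x : E) :
    ‖gradient (fun x : E ↦ talentiProfile q ((N - p) / p) (‖x‖ / l)) x‖ ^ p =
      q ^ p * ((N - p) / p) ^ p / l ^ p *
        (talentiProfile q (N - 1) (‖x‖ / l) - talentiProfile q N (‖x‖ / l)) := by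
  have hp : 0 < p := hpq.pos
  have hq : 0 < q := hpq.symm.pos
  have hρ : 0 ≤ ‖x‖ / l := by positivity
  have ha : 0 ≤ (N - p) / p := div_nonneg (sub_nonneg.2 hpN) hp.le
  have hdensity : talentiDensity q ((N - p) / p) (‖x‖ / l) ^ p = q ^ p * ((N - p) / p) ^ p *
      (talentiProfile q (N - 1) (‖x‖ / l) - talentiProfile q N (‖x‖ / l)) := by
    have hexp : ((N - p) / p + 1) * p = N := by field_simp; ring
    have hsub := talentiProfile_sub_talentiProfile_add_one (q := q) (s := N - 1) hρ
    rw [sub_add_cancel] at hsub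
    rw [talentiDensity_rpow hq.le ha hρ, hpq.symm.sub_one_mul_conj, hexp, hsub,
      Real.mul_rpow ha hq.le, mul_comm (q ^ p)]
  rw [norm_gradient_talentiProfile_norm_div hpq.symm.lt ha hl, ← div_eq_inv_mul,
    Real.div_rpow (talentiDensity_nonneg hq.le ha hρ) hl, hdensity]
  ring

/-- The `L ^ p` Sobolev inequality with constant `A` for `C¹` functions on `(E, μ)`, where `N` is
the homogeneous dimension that fixes the critical exponent `p * N / (N - p)`. -/
def HasSobolevInequality [MeasurableSpace E] (μ : Measure E) (N p A : ℝ) : Prop :=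
  ∀ f : E → ℝ, ContDiff ℝ 1 f →
    Integrable (fun x ↦ |f x| ^ (p * N / (N - p))) μ →
    Integrable (fun x ↦ ‖gradient f x‖ ^ p) μ →
    (∫ x, |f x| ^ (p * N / (N - p)) ∂μ) ^ ((N - p) / N) ≤ A ^ p * ∫ x, ‖gradient f x‖ ^ p ∂μ

namespace HasSobolevInequality

variable [MeasurableSpace E] {μ : Measure E}

lemma integral_talentiProfile_rpow_le (hSob : HasSobolevInequality μ N p A)
    (hpq : p.HolderConjugate q) (hpN : p < N) (hl : 0 ≤ l)
    (hint₁ : Integrable (fun x ↦ talentiProfile q (N - 1) (‖x‖ / l)) μ)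
    (hint : Integrable (fun x ↦ talentiProfile q N (‖x‖ / l)) μ) :
    (∫ x, talentiProfile q N (‖x‖ / l) ∂μ) ^ ((N - p) / N) ≤
      A ^ p * (q ^ p * ((N - p) / p) ^ p / l ^ p *
        (∫ x, talentiProfile q (N - 1) (‖x‖ / l) ∂μ - ∫ x, talentiProfile q N (‖x‖ / l) ∂μ)) := by
  have hcritical (x : E) :
      |talentiProfile q ((N - p) / p) (‖x‖ / l)| ^ (p * N / (N - p)) =
        talentiProfile q N (‖x‖ / l) := by
    have hρ : 0 ≤ ‖x‖ / l := by positivity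
    have hexp : (N - p) / p * (p * N / (N - p)) = N := by
      have := hpq.pos
      have : N - p ≠ 0 := (sub_pos.2 hpN).ne'
      field_simp
    rw [abs_of_nonneg (talentiProfile_nonneg hρ), talentiProfile_rpow hρ, hexp]
  have hineq := hSob _ (contDiff_talentiProfile_norm_div (s := (N - p) / p) hpq.symm.lt hl)
  simp only [hcritical, norm_gradient_talentiProfile_norm_div_rpow hpq hpN.le hl,
    integral_const_mul, integral_sub hint₁ hint] at hineq
  exact hineq hint ((hint₁.sub hint).const_mul _)

lemma integral_talentiProfile_div_rpow_le (hSob : HasSobolevInequality μ N p A)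
    (hpq : p.HolderConjugate q) (hpN : p < N) (hl : 0 < l)
    (hint₁ : Integrable (fun x ↦ talentiProfile q (N - 1) (‖x‖ / l)) μ)
    (hint : Integrable (fun x ↦ talentiProfile q N (‖x‖ / l)) μ) :
    ((∫ x, talentiProfile q N (‖x‖ / l) ∂μ) / l ^ N) ^ (1 - p / N) ≤
      A ^ p * (q ^ p * ((N - p) / p) ^ p *
        ((∫ x, talentiProfile q (N - 1) (‖x‖ / l) ∂μ) / l ^ N -
          (∫ x, talentiProfile q N (‖x‖ / l) ∂μ) / l ^ N)) := by
  have hN : 0 < N := hpq.pos.trans hpN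
  have hexp : (N - p) / N = 1 - p / N := by field_simp
  have hscale : (l ^ N) ^ (1 - p / N) = l ^ N / l ^ p := by
    rw [← Real.rpow_mul hl.le, ← Real.rpow_sub hl, ← hexp, mul_div_cancel₀ _ hN.ne']
  have hnonneg : 0 ≤ ∫ x, talentiProfile q N (‖x‖ / l) ∂μ :=
    integral_nonneg fun x ↦ talentiProfile_nonneg (by positivity)
  have hineq := hSob.integral_talentiProfile_rpow_le hpq hpN hl.le hint₁ hint
  rw [hexp] at hineq
  rw [Real.div_rpow hnonneg (by positivity), hscale, div_le_iff₀ (by positivity)]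
  refine hineq.trans_eq ?_
  field_simp

end HasSobolevInequality

end Sobolev

section AsymptoticVolume

lemma div_le_rpow_of_rpow_one_sub_mul_le {ν t a D : ℝ} (hν : 0 < ν) (hD : 0 ≤ D)
    (h : ν ^ (1 - t) * a ≤ D * ν) : a / D ≤ ν ^ t := by
  refine div_le_of_le_mul₀ hD (by positivity) ?_
  refine le_of_mul_le_mul_left (h.trans_eq ?_) (Real.rpow_pos_of_pos hν (1 - t))
  rw [← mul_assoc, ← Real.rpow_add hν, sub_add_cancel, Real.rpow_one, mul_comm]

variable {E : Type*} [NormedAddCommGroup E] [InnerProductSpace ℝ E] [CompleteSpace E]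
  [MeasurableSpace E] [OpensMeasurableSpace E] {μ : Measure E} {N p q A ν : ℝ}

lemma HasSobolevInequality.rpow_mul_integral_le (hSob : HasSobolevInequality μ N p A)
    (hpq : p.HolderConjugate q) (hpN : p < N) (hfin : ∀ r, μ (Metric.ball 0 r) ≠ ∞)
    (hν : Tendsto (fun r ↦ μ.real (Metric.ball 0 r) / r ^ N) atTop (𝓝 ν)) :
    (ν * (N * ∫ ρ in Ioi 0, ρ ^ (N - 1) * talentiProfile q N ρ)) ^ (1 - p / N) ≤
      A ^ p * (q ^ p * ((N - p) / p) ^ p *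
        (ν * (N * ∫ ρ in Ioi 0, ρ ^ (N + q - 1) * talentiProfile q N ρ))) := by
  have hN : 0 < N := hpq.pos.trans hpN
  have hq : 1 < q := hpq.symm.lt
  have hs₁ : N < q * (N - 1) := by nlinarith [hpq.sub_one_mul_conj]
  have hs : N < q * N := lt_mul_of_one_lt_left hN hq
  have hexp : 0 ≤ 1 - p / N := sub_nonneg.2 ((div_le_one hN).2 hpN.le)
  have hlim₁ := tendsto_integral_talentiProfile_dist_div hpq.symm.pos hN hs₁ hfin hν
  have hlim := tendsto_integral_talentiProfile_dist_div hpq.symm.pos hN hs hfin hν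
  have hint₁ := eventually_integrable_talentiProfile_dist_div hpq.symm.pos hN.le hs₁ hfin hν
  have hint := eventually_integrable_talentiProfile_dist_div hpq.symm.pos hN.le hs hfin hν
  have hdiff := integral_rpow_mul_talentiProfile_sub (a := N - 1) (s := N - 1) hpq.symm.nonneg
    (by linarith [hpq.lt]) (by linarith) (by linarith)
  rw [sub_add_cancel, sub_add_eq_add_sub] at hdiff
  rw [← hdiff, mul_sub, mul_sub]
  refine le_of_tendsto_of_tendsto (hlim.rpow_const (.inr hexp))
    (((hlim₁.sub hlim).const_mul _).const_mul _) ?_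
  simp only [dist_zero_right] at hint₁ hint ⊢
  filter_upwards [eventually_gt_atTop 0, hint₁, hint] with l hl hl₁ hl₂
  exact hSob.integral_talentiProfile_div_rpow_le hpq hpN hl hl₁ hl₂

theorem stmt_14_general (hSob : HasSobolevInequality μ N p A) (hA : 0 < A)
    (hpq : p.HolderConjugate q) (hpN : p < N) (hfin : ∀ r, μ (Metric.ball 0 r) ≠ ∞)
    (hν : Tendsto (fun r ↦ μ.real (Metric.ball 0 r) / r ^ N) atTop (𝓝 ν)) :
    ν ^ (1 - p / N) *
        (∫ ρ in Ioi 0, N * q * ρ ^ (q - 1 + N) * talentiProfile q (N + 1) ρ) ^ (1 - p / N) ≤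
      A ^ p * ν * (q ^ p * ((N - p) / p) ^ p * N *
        ∫ ρ in Ioi 0, ρ ^ (N + q - 1) * talentiProfile q N ρ) ∧
    (0 < ν →
      (∫ ρ in Ioi 0, N * q * ρ ^ (q - 1 + N) * talentiProfile q (N + 1) ρ) ^ (1 - p / N) /
        (A ^ p * (q ^ p * ((N - p) / p) ^ p * N *
          ∫ ρ in Ioi 0, ρ ^ (N + q - 1) * talentiProfile q N ρ)) ≤ ν ^ (p / N)) := by
  have hN : 0 < N := hpq.pos.trans hpN
  have hq : 0 < q := hpq.symm.pos
  have hν0 : 0 ≤ ν := ge_of_tendsto hν <| by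
    filter_upwards [eventually_ge_atTop 0] with r hr using by positivity
  have hJA := integral_rpow_mul_talentiProfile_nonneg (a := N - 1) (q := q) (s := N)
  have hJB := integral_rpow_mul_talentiProfile_nonneg (a := N + q - 1) (q := q) (s := N)
  have ha : 0 ≤ (N - p) / p := div_nonneg (sub_nonneg.2 hpN.le) hpq.nonneg
  rw [integral_rpow_mul_talentiProfile_add_one hq hN (lt_mul_of_one_lt_left hN hpq.symm.lt)]
  have hmain := hSob.rpow_mul_integral_le hpq hpN hfin hν
  rw [Real.mul_rpow hν0 (by positivity)] at hmain
  refine ⟨hmain.trans_eq (by ring), fun hνpos ↦ ?_⟩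
  exact div_le_rpow_of_rpow_one_sub_mul_le hνpos (by positivity) (hmain.trans_eq (by ring))

end AsymptoticVolume

/-- Theorem A of the paper on the metric measure space `(ℝⁿ, eucl, μ)`: if `μ` has
Euclidean volume growth with asymptotic volume `ν` and satisfies an `L^p` Sobolev
inequality with constant `A`, then `ν^{1-p/n} A_{n,p} ≤ A^p ν B_{n,p}`; in particular,
if `ν > 0` then `ν^{p/n} ≥ A_{n,p}/(A^p B_{n,p})`. -/
theorem stmt_14 (n : ℕ) (hn : 2 ≤ n) (p q : ℝ) (hp : 1 < p) (hpn : p < n)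
    (hq : q = p / (p - 1)) (A : ℝ) (hA : 0 < A)
    (μ : Measure (EuclideanSpace ℝ (Fin n))) (C ν : ℝ)
    (hC : ∀ r > (0:ℝ), μ (Metric.ball 0 r) ≤ ENNReal.ofReal (C * r ^ n))
    (hν : Tendsto (fun r => (μ (Metric.ball 0 r)).toReal / r ^ n) atTop (nhds ν))
    (hSob : ∀ f : EuclideanSpace ℝ (Fin n) → ℝ, ContDiff ℝ 1 f →
      Integrable (fun x => |f x| ^ (p * n / ((n : ℝ) - p))) μ →
      Integrable (fun x => ‖gradient f x‖ ^ p) μ →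
      (∫ x, |f x| ^ (p * n / ((n : ℝ) - p)) ∂μ) ^ (((n : ℝ) - p) / n)
        ≤ A ^ p * ∫ x, ‖gradient f x‖ ^ p ∂μ) :
    ν ^ (1 - p / n) *
        (∫ ρ in Ioi (0:ℝ),
            (n : ℝ) * q * ρ ^ (q - 1 + n) * (1 + ρ ^ q) ^ (-((n : ℝ) + 1))) ^ (1 - p / n)
      ≤ A ^ p * ν *
        (q ^ p * (((n : ℝ) - p) / p) ^ p * (n : ℝ) *
          ∫ ρ in Ioi (0:ℝ), ρ ^ ((n : ℝ) + q - 1) * (1 + ρ ^ q) ^ (-(n : ℝ))) ∧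
    (0 < ν →
      (∫ ρ in Ioi (0:ℝ),
          (n : ℝ) * q * ρ ^ (q - 1 + n) * (1 + ρ ^ q) ^ (-((n : ℝ) + 1))) ^ (1 - p / n) /
        (A ^ p * (q ^ p * (((n : ℝ) - p) / p) ^ p * (n : ℝ) *
          ∫ ρ in Ioi (0:ℝ), ρ ^ ((n : ℝ) + q - 1) * (1 + ρ ^ q) ^ (-(n : ℝ))))
        ≤ ν ^ (p / n)) := by
  exact stmt_14_general hSob hA ((Real.holderConjugate_iff_eq_conjExponent hp).2 hq) hpn
    (measure_ball_ne_top_of_le_ofReal hC) (by simpa only [Real.rpow_natCast] using! hν)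
end
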